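/- arXiv:2407.06588 — 3 statements merged into one kernel-verified Lean document; each statement's English description precedes it below -/
import Mathlib

section
/- Let (M, dist) be a metric space, f : M → M a map, and W₁, …, W_s ⊆ M fixed subsets. Let L > 0, let N be a positive integer, let s₀ be an integer with 3 ≤ s₀ ≤ s, and let d > 0. Then PT(L, 1, s₀, d) ⊆ PT(L, N+1, s₀, d) ∪ PT((s₀−1)L + (s₀−2)N, 1, s₀−1, d). -/
/-- A `d`-pseudotrajectory of `f`: a bi-infinite sequence `x` with
`dist (f (x k)) (x (k+1)) < d` for all `k`. -/
def IsPseudotrajectory {M : Type*} [MetricSpace M] (f : M → M) (d : ℝ) (x : ℤ → M) : Prop :=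
  ∀ k : ℤ, dist (f (x k)) (x (k + 1)) < d

/-- The class `PT(L, N, s₀, d)` of `d`-pseudotrajectories of `f` relative to the family of sets
`W₁, …, W_s`: those `d`-pseudotrajectories `x` for which there are `2 ≤ s̄ ≤ s₀`, indices
`j₁, …, j_{s̄}`, an integer `l` and times
`0 = τ(1) < t(2) ≤ τ(2) < t(3) ≤ ⋯ < t(s̄-1) ≤ τ(s̄-1) < t(s̄)` such that
`t(i+1) - τ(i) ≤ L`, `τ(i) - t(i) ≥ N`, the trajectory lies in `W_{j_i}` on
`[l + t(i), l + τ(i)]` for `2 ≤ i ≤ s̄ - 1`, in `W_{j₁}` on `(-∞, l]` and in `W_{j_{s̄}}` on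
`[l + t(s̄), ∞)`. -/
def PT {M : Type*} [MetricSpace M] (f : M → M) {s : ℕ} (W : Fin s → Set M)
    (L : ℝ) (N : ℕ) (s₀ : ℕ) (d : ℝ) : Set (ℤ → M) :=
  {x | IsPseudotrajectory f d x ∧
    ∃ sb : ℕ, 2 ≤ sb ∧ sb ≤ s₀ ∧
      ∃ (j : ℕ → Fin s) (l : ℤ) (t τ : ℕ → ℤ),
        τ 1 = 0 ∧
        (∀ i : ℕ, 1 ≤ i → i ≤ sb - 1 → τ i < t (i + 1)) ∧
        (∀ i : ℕ, 2 ≤ i → i ≤ sb - 1 → t i ≤ τ i) ∧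
        (∀ i : ℕ, 1 ≤ i → i ≤ sb - 1 → ((t (i + 1) - τ i : ℤ) : ℝ) ≤ L) ∧
        (∀ i : ℕ, 2 ≤ i → i ≤ sb - 1 → (N : ℤ) ≤ τ i - t i) ∧
        (∀ i : ℕ, 2 ≤ i → i ≤ sb - 1 →
          ∀ k : ℤ, l + t i ≤ k → k ≤ l + τ i → x k ∈ W (j i)) ∧
        (∀ k : ℤ, k ≤ l → x k ∈ W (j 1)) ∧
        (∀ k : ℤ, l + t sb ≤ k → x k ∈ W (j sb))}

/-!
If every intermediate stay of the pseudotrajectory lasts at least `N + 1`, nothing has to be done.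
Otherwise some stay lasts at most `N`; forget it. The transitions before and after it, each of
length at most `L`, merge with it into a single transition of length at most `2 * L + N`, and the
itinerary has one stay fewer. Since `s₀ ≥ 3`, this bound is at most `(s₀ - 1) * L + (s₀ - 2) * N`.
-/

/-- The combinatorial data in the definition of `PT`: the sequence `x` is in `W (j 1)` up to time
`l`, stays in `W (j i)` from time `l + t i` to `l + τ i` for `1 < i < n`, and is in `W (j n)` from
time `l + t n` on. Intermediate stays last at least `N` and transitions between consecutive stays
at most `L`. The values of `j`, `t`, `τ` at other indices are irrelevant. -/
structure IsItinerary {M ι : Type*} (W : ι → Set M) (x : ℤ → M) (L : ℝ) (N n : ℕ)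
    (j : ℕ → ι) (l : ℤ) (t τ : ℕ → ℤ) : Prop where
  two_le : 2 ≤ n
  departure_one : τ 1 = 0
  departure_lt : ∀ i, 1 ≤ i → i < n → τ i < t (i + 1)
  transition_le : ∀ i, 1 ≤ i → i < n → ((t (i + 1) - τ i : ℤ) : ℝ) ≤ L
  le_stay : ∀ i, 2 ≤ i → i < n → (N : ℤ) ≤ τ i - t i
  mem_stay : ∀ i, 2 ≤ i → i < n → ∀ k, l + t i ≤ k → k ≤ l + τ i → x k ∈ W (j i)
  mem_first : ∀ k, k ≤ l → x k ∈ W (j 1)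
  mem_last : ∀ k, l + t n ≤ k → x k ∈ W (j n)

/-- The increasing enumeration of the natural numbers other than `p`, used to renumber the stays
of an itinerary after the `p`-th one has been dropped (the analogue on `ℕ` of `Fin.succAbove`). -/
def skipIndex (p i : ℕ) : ℕ := if i < p then i else i + 1

section SkipIndex

variable {p i : ℕ}

theorem skipIndex_of_lt (h : i < p) : skipIndex p i = i := if_pos h

theorem skipIndex_of_le (h : p ≤ i) : skipIndex p i = i + 1 := if_neg h.not_gt

theorem le_skipIndex (p i : ℕ) : i ≤ skipIndex p i := by
  unfold skipIndex; split_ifs <;> omega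

theorem skipIndex_le_succ (p i : ℕ) : skipIndex p i ≤ i + 1 := by
  unfold skipIndex; split_ifs <;> omega

theorem skipIndex_succ_of_ne (h : i + 1 ≠ p) : skipIndex p (i + 1) = skipIndex p i + 1 := by
  unfold skipIndex; split_ifs <;> omega

end SkipIndex

namespace IsItinerary

variable {M ι : Type*} {W : ι → Set M} {x : ℤ → M} {L L' : ℝ} {N n : ℕ}
  {j : ℕ → ι} {l : ℤ} {t τ : ℕ → ℤ} {i p : ℕ}

theorem arrival_le_departure (h : IsItinerary W x L N n j l t τ) (hi : 2 ≤ i) (hin : i < n) :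
    t i ≤ τ i := by
  have := h.le_stay i hi hin
  omega

theorem transition_bound_pos (h : IsItinerary W x L N n j l t τ) : 0 < L := by
  have transition_pos : (0 : ℝ) < (t 2 - τ 1 : ℤ) :=
    mod_cast sub_pos.2 (h.departure_lt 1 le_rfl h.two_le)
  exact transition_pos.trans_le (h.transition_le 1 le_rfl h.two_le)

theorem mono_transition (h : IsItinerary W x L N n j l t τ) (hL : L ≤ L') :
    IsItinerary W x L' N n j l t τ :=
  { h with transition_le := fun i hi hin => (h.transition_le i hi hin).trans hL }

theorem departure_lt_arrival_add_two (h : IsItinerary W x L N n j l t τ) (hi : 1 ≤ i)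
    (hin : i + 1 < n) : τ i < t (i + 2) :=
  calc
    τ i < t (i + 1) := h.departure_lt i hi (by omega)
    _ ≤ τ (i + 1) := h.arrival_le_departure (by omega) hin
    _ < t (i + 2) := h.departure_lt (i + 1) (by omega) hin

theorem merged_transition_le (h : IsItinerary W x L N n j l t τ) (hi : 1 ≤ i) (hin : i + 1 < n) :
    ((t (i + 2) - τ i : ℤ) : ℝ) ≤ 2 * L + (τ (i + 1) - t (i + 1) : ℤ) := by
  have before := h.transition_le i hi (by omega)
  have after := h.transition_le (i + 1) (by omega) hin
  push_cast at before after ⊢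
  linarith

theorem drop_stay (h : IsItinerary W x L N (n + 1) j l t τ) (hp : 2 ≤ p) (hpn : p ≤ n) :
    IsItinerary W x (2 * L + (τ p - t p : ℤ)) N n
      (j ∘ skipIndex p) l (t ∘ skipIndex p) (τ ∘ skipIndex p) := by
  have skip_one : skipIndex p 1 = 1 := skipIndex_of_lt hp
  have skip_last : skipIndex p n = n + 1 := skipIndex_of_le hpn
  have le_skip {m i : ℕ} (hi : m ≤ i) : m ≤ skipIndex p i := hi.trans (le_skipIndex p i)
  have skip_lt {i : ℕ} (hin : i < n) : skipIndex p i < n + 1 :=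
    (skipIndex_le_succ p i).trans_lt (by omega)
  refine
    { two_le := hp.trans hpn
      departure_one := by simpa only [Function.comp_apply, skip_one] using h.departure_one
      departure_lt := fun i hi hin => ?_
      transition_le := fun i hi hin => ?_
      le_stay := fun i hi hin => h.le_stay _ (le_skip hi) (skip_lt hin)
      mem_stay := fun i hi hin => h.mem_stay _ (le_skip hi) (skip_lt hin)
      mem_first := by simpa only [Function.comp_apply, skip_one] using h.mem_first
      mem_last := by simpa only [Function.comp_apply, skip_last] using h.mem_last }
  · obtain rfl | hip := eq_or_ne (i + 1) p
    · simpa only [Function.comp_apply, skipIndex_of_lt i.lt_succ_self, skipIndex_of_le le_rfl]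
        using h.departure_lt_arrival_add_two hi (by omega)
    · simpa only [Function.comp_apply, skipIndex_succ_of_ne hip]
        using h.departure_lt _ (le_skip hi) (skip_lt hin)
  · obtain rfl | hip := eq_or_ne (i + 1) p
    · simpa only [Function.comp_apply, skipIndex_of_lt i.lt_succ_self, skipIndex_of_le le_rfl]
        using h.merged_transition_le hi (by omega)
    · have stay_nonneg : (0 : ℝ) ≤ (τ p - t p : ℤ) :=
        mod_cast sub_nonneg.2 (h.arrival_le_departure hp (by omega))
      have transition_le := h.transition_le _ (le_skip hi) (skip_lt hin)
      simp only [Function.comp_apply, skipIndex_succ_of_ne hip]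
      linarith [h.transition_bound_pos]

end IsItinerary

section PT

variable {M : Type*} [MetricSpace M] {f : M → M} {s : ℕ} {W : Fin s → Set M} {L L' : ℝ}
  {N s₀ : ℕ} {d : ℝ} {x : ℤ → M}

theorem mem_PT_iff_exists_isItinerary :
    x ∈ PT f W L N s₀ d ↔
      IsPseudotrajectory f d x ∧ ∃ n ≤ s₀, ∃ j l t τ, IsItinerary W x L N n j l t τ := by
  refine and_congr_right fun _ => ⟨?_, ?_⟩
  · rintro ⟨n, two_le, hn, j, l, t, τ, departure_one, departure_lt, -, transition_le, le_stay,
      mem_stay, mem_first, mem_last⟩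
    exact ⟨n, hn, j, l, t, τ, two_le, departure_one,
      fun i hi hin => departure_lt i hi (Nat.le_sub_one_of_lt hin),
      fun i hi hin => transition_le i hi (Nat.le_sub_one_of_lt hin),
      fun i hi hin => le_stay i hi (Nat.le_sub_one_of_lt hin),
      fun i hi hin => mem_stay i hi (Nat.le_sub_one_of_lt hin), mem_first, mem_last⟩
  · rintro ⟨n, hn, j, l, t, τ, h⟩
    have lt_of_le {i : ℕ} (hin : i ≤ n - 1) : i < n :=
      Nat.lt_of_le_sub_one (zero_lt_two.trans_le h.two_le) hin
    exact ⟨n, h.two_le, hn, j, l, t, τ, h.departure_one,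
      fun i hi hin => h.departure_lt i hi (lt_of_le hin),
      fun i hi hin => h.arrival_le_departure hi (lt_of_le hin),
      fun i hi hin => h.transition_le i hi (lt_of_le hin),
      fun i hi hin => h.le_stay i hi (lt_of_le hin),
      fun i hi hin => h.mem_stay i hi (lt_of_le hin), h.mem_first, h.mem_last⟩

theorem PT_subset_PT_of_le (hL : L ≤ L') : PT f W L N s₀ d ⊆ PT f W L' N s₀ d := by
  intro x hx
  obtain ⟨hx, n, hn, j, l, t, τ, h⟩ := mem_PT_iff_exists_isItinerary.1 hx
  exact mem_PT_iff_exists_isItinerary.2 ⟨hx, n, hn, j, l, t, τ, h.mono_transition hL⟩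

end PT

theorem two_mul_add_le_sub_one_mul_add_sub_two_mul {a b : ℝ} (ha : 0 ≤ a) (hb : 0 ≤ b) {m : ℕ}
    (hm : 3 ≤ m) : 2 * a + b ≤ ((m - 1 : ℕ) : ℝ) * a + ((m - 2 : ℕ) : ℝ) * b := by
  have two_le : (2 : ℝ) ≤ (m - 1 : ℕ) := mod_cast Nat.le_sub_one_of_lt hm
  have one_le : (1 : ℝ) ≤ (m - 2 : ℕ) := mod_cast Nat.le_sub_of_add_le' hm
  exact add_le_add (mul_le_mul_of_nonneg_right two_le ha) (le_mul_of_one_le_left hb one_le)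

theorem pt_subset_union_general {M : Type*} [MetricSpace M] (f : M → M) {s : ℕ}
    (W : Fin s → Set M) (L : ℝ) (N₀ N s₀ : ℕ) (d : ℝ) :
    PT f W L N₀ s₀ d ⊆ PT f W L (N + 1) s₀ d ∪ PT f W (2 * L + N) N₀ (s₀ - 1) d := by
  intro x hx
  obtain ⟨hx, n, hn, j, l, t, τ, h⟩ := mem_PT_iff_exists_isItinerary.1 hx
  by_cases long_stays : ∀ i, 2 ≤ i → i < n → ((N + 1 : ℕ) : ℤ) ≤ τ i - t i
  · exact .inl <| mem_PT_iff_exists_isItinerary.2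
      ⟨hx, n, hn, j, l, t, τ, { h with le_stay := long_stays }⟩
  · push Not at long_stays
    obtain ⟨p, hp, hpn, short_stay⟩ := long_stays
    obtain ⟨m, rfl⟩ : ∃ m, n = m + 1 := Nat.exists_eq_add_one.2 (by omega)
    have stay_le : ((τ p - t p : ℤ) : ℝ) ≤ N :=
      mod_cast Int.le_of_lt_add_one (by exact_mod_cast short_stay)
    have dropped := h.drop_stay hp (Nat.le_of_lt_succ hpn)
    exact .inr <| mem_PT_iff_exists_isItinerary.2
      ⟨hx, m, Nat.le_sub_one_of_lt hn, _, l, _, _, dropped.mono_transition (by gcongr)⟩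

/-- For `L > 0`, a positive integer `N`, `3 ≤ s₀ ≤ s` and `d > 0`, one has
`PT(L, 1, s₀, d) ⊆ PT(L, N+1, s₀, d) ∪ PT((s₀-1)L + (s₀-2)N, 1, s₀-1, d)`. -/
theorem pt_subset_union {M : Type*} [MetricSpace M] (f : M → M) {s : ℕ} (W : Fin s → Set M)
    (L : ℝ) (hL : 0 < L) (N : ℕ) (hN : 0 < N) (s₀ : ℕ) (hs₀ : 3 ≤ s₀) (hs₀s : s₀ ≤ s)
    (d : ℝ) (hd : 0 < d) :
    PT f W L 1 s₀ d ⊆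
      PT f W L (N + 1) s₀ d ∪
        PT f W (((s₀ - 1 : ℕ) : ℝ) * L + ((s₀ - 2 : ℕ) : ℝ) * (N : ℝ)) 1 (s₀ - 1) d := by
  exact (pt_subset_union_general f W L 1 N s₀ d).trans <| Set.union_subset_union_right _ <|
    PT_subset_PT_of_le <| two_mul_add_le_sub_one_mul_add_sub_two_mul hL.le N.cast_nonneg hs₀
end

section
/- Let m ≥ 1 and u ≥ 1 be integers. Let A be a topological space, U ⊆ ℝᵘ an open set, and h₁ : A → ℝᵐ, h₂ : U → ℝᵐ continuous maps (ℝᵐ carrying the Euclidean metric), with h₁(A) ⊆ ℝ^{m−1} × {0}. Suppose v₀ ∈ U and a ∈ A satisfy h₁(a) = h₂(v₀), and suppose h₁ and h₂ are C⁰ transverse at the pair (a, v₀). Then for every neighborhood U' ⊆ U of v₀ there exist v₁, v₂ ∈ U' such that the m-th coordinate of h₂(v₁) is strictly positive and the m-th coordinate of h₂(v₂) is strictly negative. -/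
/-- The intersection `h₁(C) ∩ h₂(D)` is `δ`-essential: for all continuous maps `h₁'`, `h₂'`
within uniform `C⁰` distance `δ` of `h₁`, `h₂` respectively, the images `h₁'(C)` and `h₂'(D)`
still intersect. -/
def DeltaEssential {A B M : Type*} [TopologicalSpace A] [TopologicalSpace B] [MetricSpace M]
    (h₁ : C(A, M)) (h₂ : C(B, M)) (Cs : Set A) (Ds : Set B) (δ : ℝ) : Prop :=
  ∀ (h₁' : C(A, M)) (h₂' : C(B, M)),
    (∀ x : A, dist (h₁ x) (h₁' x) ≤ δ) → (∀ y : B, dist (h₂ y) (h₂' y) ≤ δ) →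
    (h₁' '' Cs ∩ h₂' '' Ds).Nonempty

/-- `h₁` and `h₂` are `C⁰` transverse at the pair `(a, b)`: for all neighborhoods `Ua` of `a`
and `Ub` of `b` there is `δ > 0` such that the intersection `h₁(Ua) ∩ h₂(Ub)` is
`δ`-essential. -/
def C0TransverseAt {A B M : Type*} [TopologicalSpace A] [TopologicalSpace B] [MetricSpace M]
    (h₁ : C(A, M)) (h₂ : C(B, M)) (a : A) (b : B) : Prop :=
  ∀ Ua ∈ nhds a, ∀ Ub ∈ nhds b, ∃ δ > (0 : ℝ), DeltaEssential h₁ h₂ Ua Ub δ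

/-- The last coordinate index of `Fin m` for `m ≥ 1`. -/
def lastIndex (m : ℕ) (hm : 1 ≤ m) : Fin m := ⟨m - 1, by omega⟩

/-!
Translating `h₂` by a vector `w` is a `C⁰`-perturbation of size `‖w‖`, so a `δ`-essential
intersection survives it whenever `‖w‖ ≤ δ`: some `h₂ y + w` lies in the image of `h₁`. If that
image lies in the hyperplane `φ = 0`, then `φ (h₂ y) = -φ w`, and both signs of `φ w` are available.
-/

open scoped Topology

section NormedGroup

variable {A B E : Type*} [TopologicalSpace A] [TopologicalSpace B] [NormedAddCommGroup E]
  {h₁ : C(A, E)} {h₂ : C(B, E)} {C : Set A} {D : Set B} {δ : ℝ}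

theorem DeltaEssential.exists_eq_add (hess : DeltaEssential h₁ h₂ C D δ) {w : E} (hw : ‖w‖ ≤ δ) :
    ∃ x ∈ C, ∃ y ∈ D, h₁ x = h₂ y + w := by
  have hδ : 0 ≤ δ := (norm_nonneg w).trans hw
  obtain ⟨_, ⟨x, hx, rfl⟩, y, hy, hyx⟩ :=
    hess h₁ (h₂ + .const B w) (fun x ↦ by simpa using hδ) (fun y ↦ by simpa using hw)
  exact ⟨x, hx, y, hy, hyx.symm⟩

end NormedGroup

section NormedSpace

variable {A B E : Type*} [TopologicalSpace A] [TopologicalSpace B] [NormedAddCommGroup E]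
  [NormedSpace ℝ E] {h₁ : C(A, E)} {h₂ : C(B, E)} {C : Set A} {D : Set B} {δ : ℝ}
  {φ : Module.Dual ℝ E}

theorem exists_norm_le_and_dual_apply_pos (hφ : φ ≠ 0) (hδ : 0 < δ) :
    ∃ w : E, ‖w‖ ≤ δ ∧ 0 < φ w := by
  obtain ⟨e, he⟩ : ∃ e, φ e = 1 := LinearMap.surjective hφ 1
  have he_norm : 0 < ‖e‖ := norm_pos_iff.mpr fun h ↦ by simp [h] at he
  refine ⟨(δ / ‖e‖) • e, ?_, ?_⟩
  · rw [norm_smul_of_nonneg (by positivity), div_mul_cancel₀ _ he_norm.ne']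
  · rw [map_smul, he, smul_eq_mul, mul_one]
    positivity

theorem DeltaEssential.exists_dual_apply_neg (hess : DeltaEssential h₁ h₂ C D δ) (hδ : 0 < δ)
    (hφ : φ ≠ 0) (hC : ∀ x ∈ C, φ (h₁ x) = 0) : ∃ y ∈ D, φ (h₂ y) < 0 := by
  obtain ⟨w, hw, hφw⟩ := exists_norm_le_and_dual_apply_pos hφ hδ
  obtain ⟨x, hx, y, hy, hxy⟩ := hess.exists_eq_add hw
  have hsum : φ (h₂ y) + φ w = 0 := by rw [← map_add, ← hxy, hC x hx]
  exact ⟨y, hy, by linarith⟩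

theorem DeltaEssential.exists_dual_apply_pos (hess : DeltaEssential h₁ h₂ C D δ) (hδ : 0 < δ)
    (hφ : φ ≠ 0) (hC : ∀ x ∈ C, φ (h₁ x) = 0) : ∃ y ∈ D, 0 < φ (h₂ y) := by
  simpa using hess.exists_dual_apply_neg hδ (neg_ne_zero.mpr hφ) (by simpa using hC)

theorem c0Transverse_sign_change_general {a : A} {b : B} (htrans : C0TransverseAt h₁ h₂ a b)
    (hφ : φ ≠ 0) (hh₁ : ∀ᶠ x in 𝓝 a, φ (h₁ x) = 0) :
    ∀ V ∈ 𝓝 b, ∃ v₁ ∈ V, ∃ v₂ ∈ V, 0 < φ (h₂ v₁) ∧ φ (h₂ v₂) < 0 := by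
  intro V hV
  obtain ⟨δ, hδ, hess⟩ := htrans _ hh₁ V hV
  obtain ⟨v₁, hv₁, hpos⟩ := hess.exists_dual_apply_pos hδ hφ fun _ hx ↦ hx
  obtain ⟨v₂, hv₂, hneg⟩ := hess.exists_dual_apply_neg hδ hφ fun _ hx ↦ hx
  exact ⟨v₁, hv₁, v₂, hv₂, hpos, hneg⟩

end NormedSpace

theorem euclideanSpace_projₗ_ne_zero {𝕜 ι : Type*} [RCLike 𝕜] (i : ι) :
    (EuclideanSpace.projₗ i : EuclideanSpace 𝕜 ι →ₗ[𝕜] 𝕜) ≠ 0 := by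
  classical
  exact DFunLike.ne_iff.mpr ⟨EuclideanSpace.single i 1, by simp⟩

/-- Let `m, u ≥ 1`, `A` a topological space, `U ⊆ ℝᵘ` open, `h₁ : A → ℝᵐ` and
`h₂ : U → ℝᵐ` continuous with `h₁(A) ⊆ ℝ^{m-1} × {0}`.  If `h₁(a) = h₂(v₀)` and `h₁`, `h₂` are
`C⁰` transverse at `(a, v₀)`, then every neighborhood of `v₀` in `U` contains points `v₁`, `v₂`
with `(h₂ v₁)ₘ > 0` and `(h₂ v₂)ₘ < 0`. -/
theorem c0Transverse_sign_change (m u : ℕ) (hm : 1 ≤ m) (hu : 1 ≤ u)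
    (A : Type*) [TopologicalSpace A]
    (U : Set (EuclideanSpace ℝ (Fin u))) (hU : IsOpen U)
    (h₁ : C(A, EuclideanSpace ℝ (Fin m))) (h₂ : C(U, EuclideanSpace ℝ (Fin m)))
    (hh₁ : ∀ a : A, h₁ a (lastIndex m hm) = 0)
    (a : A) (v₀ : U) (hav : h₁ a = h₂ v₀)
    (htrans : C0TransverseAt h₁ h₂ a v₀) :
    ∀ U' ∈ nhds v₀, ∃ v₁ ∈ U', ∃ v₂ ∈ U',
      0 < h₂ v₁ (lastIndex m hm) ∧ h₂ v₂ (lastIndex m hm) < 0 := by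
  exact c0Transverse_sign_change_general htrans
    (euclideanSpace_projₗ_ne_zero (lastIndex m hm)) (.of_forall hh₁)
end

section
/- Let m ≥ 1 and u ≥ 1 be integers. Let A be a topological space, U ⊆ ℝᵘ an open neighborhood of 0, h₁ : A → ℝᵐ continuous with h₁(A) = (−1,1)^{m−1} × {0}, and h₂ : U → ℝᵐ continuous with h₂(U) ⊆ (−1,1)ᵐ (ℝᵐ carrying the Euclidean metric). Suppose the m-th coordinate of h₂(0) equals 0, and suppose h₁ and h₂ are C⁰ transverse at every pair (a, b) ∈ A × U with h₁(a) = h₂(b). Then there exist v₁, v₂ ∈ U such that the m-th coordinate of h₂(v₁) is strictly positive, the m-th coordinate of h₂(v₂) is strictly negative, and v₁ ∉ {t·v₂ : t ≥ 0}. -/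
/-- The open cube `(-1, 1)ᵐ` in `ℝᵐ`. -/
def openCube (m : ℕ) : Set (EuclideanSpace ℝ (Fin m)) :=
  {y | ∀ i : Fin m, y i ∈ Set.Ioo (-1 : ℝ) 1}

/-- The slice `(-1, 1)^{m-1} × {0}` in `ℝᵐ`: the first `m - 1` coordinates lie in `(-1, 1)` and
the last coordinate is `0`. -/
def openSlice (m : ℕ) : Set (EuclideanSpace ℝ (Fin m)) :=
  {y | ∀ i : Fin m, ((i : ℕ) + 1 < m → y i ∈ Set.Ioo (-1 : ℝ) 1) ∧
    ((i : ℕ) + 1 = m → y i = 0)}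

/-!
Pushing `h₂` off the hyperplane `ℓ = 0` containing the image of `h₁` would destroy an essential
intersection unless `ℓ ∘ h₂` takes both signs near every zero; in particular `ℓ ∘ h₂` is nonzero on
a dense set. If all points where it is positive lay on the same ray from `0` as all points where it
is negative, then `ℓ ∘ h₂` would vanish off a single closed ray, hence on a nonempty open set.
-/

open Topology

section Transversality

variable {A B M : Type*} [TopologicalSpace A] [TopologicalSpace B]
  [NormedAddCommGroup M] [NormedSpace ℝ M]

theorem exists_norm_eq_and_apply_neg {ℓ : M →L[ℝ] ℝ} (hℓ : ℓ ≠ 0) {δ : ℝ} (hδ : 0 < δ) :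
    ∃ w : M, ‖w‖ = δ ∧ ℓ w < 0 := by
  have hsurj : Function.Surjective ℓ := LinearMap.surjective (by exact_mod_cast hℓ)
  obtain ⟨x, hx⟩ := hsurj (-1)
  have hx_pos : 0 < ‖x‖ := norm_pos_iff.2 (by rintro rfl; simp at hx)
  refine ⟨(δ / ‖x‖) • x, ?_, ?_⟩
  · rw [norm_smul, Real.norm_of_nonneg (by positivity), div_mul_cancel₀ _ hx_pos.ne']
  · rw [map_smul, hx, smul_eq_mul, mul_neg_one, neg_lt_zero]
    positivity

theorem DeltaEssential.exists_apply_pos {h₁ : C(A, M)} {h₂ : C(B, M)} {C : Set A} {D : Set B}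
    {δ : ℝ} (h : DeltaEssential h₁ h₂ C D δ) (hδ : 0 < δ) {ℓ : M →L[ℝ] ℝ} (hℓ : ℓ ≠ 0)
    (hC : ∀ x ∈ C, 0 ≤ ℓ (h₁ x)) : ∃ v ∈ D, 0 < ℓ (h₂ v) := by
  obtain ⟨w, hw_norm, hw_neg⟩ := exists_norm_eq_and_apply_neg hℓ hδ
  obtain ⟨_, ⟨x, hx, rfl⟩, v, hv, hvx⟩ := h h₁ (h₂ + ContinuousMap.const B w)
    (fun x ↦ by simp [hδ.le]) (fun y ↦ by simp [hw_norm])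
  have hsum : ℓ (h₂ v) + ℓ w = ℓ (h₁ x) := by simpa using congrArg ℓ hvx
  exact ⟨v, hv, by linarith [hC x hx]⟩

variable {h₁ : C(A, M)} {h₂ : C(B, M)} {a : A} {b : B} {ℓ : M →L[ℝ] ℝ}

theorem C0TransverseAt.frequently_apply_pos (h : C0TransverseAt h₁ h₂ a b) (hℓ : ℓ ≠ 0)
    (ha : ∀ᶠ x in 𝓝 a, 0 ≤ ℓ (h₁ x)) : ∃ᶠ v in 𝓝 b, 0 < ℓ (h₂ v) := by
  refine Filter.frequently_iff.2 fun {V} hV ↦ ?_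
  obtain ⟨δ, hδ, hess⟩ := h _ ha V hV
  exact hess.exists_apply_pos hδ hℓ fun _ hx ↦ hx

theorem C0TransverseAt.frequently_apply_neg (h : C0TransverseAt h₁ h₂ a b) (hℓ : ℓ ≠ 0)
    (ha : ∀ᶠ x in 𝓝 a, ℓ (h₁ x) ≤ 0) : ∃ᶠ v in 𝓝 b, ℓ (h₂ v) < 0 := by
  simpa using h.frequently_apply_pos (neg_ne_zero.2 hℓ) (by simpa using ha)

end Transversality

section Rays

variable {E : Type*} [AddCommGroup E] [Module ℝ E] [TopologicalSpace E] [ContinuousSMul ℝ E]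

theorem exists_mem_not_sameRay {U : Set E} (hU : U ∈ 𝓝 0) {x : E} (hx : x ≠ 0) :
    ∃ y ∈ U, ¬SameRay ℝ x y := by
  have htendsto : Filter.Tendsto (fun r : ℝ ↦ r • x) (𝓝[<] 0) (𝓝 0) :=
    (Continuous.tendsto' (by fun_prop) 0 0 (zero_smul ℝ x)).mono_left nhdsWithin_le_nhds
  obtain ⟨r, hrU, hr⟩ := ((htendsto.eventually hU).and self_mem_nhdsWithin).exists
  exact ⟨r • x, hrU, fun h ↦ (sameRay_smul_right_iff.1 h).elim (not_le.2 hr) hx⟩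

variable [IsTopologicalAddGroup E] [T2Space E]

theorem isClosed_setOf_sameRay (x : E) : IsClosed {y | SameRay ℝ x y} := by
  rcases eq_or_ne x 0 with rfl | hx
  · simp
  · have hray : {y | SameRay ℝ x y} = (fun r : ℝ ↦ r • x) '' Set.Ici 0 := by
      ext y
      exact (exists_nonneg_left_iff_sameRay hx).symm
    rw [hray]
    exact (isClosedEmbedding_smul_left hx).isClosedMap _ isClosed_Ici

theorem exists_pos_neg_not_sameRay_of_dense {U : Set E} (hU : U ∈ 𝓝 0) {f : U → ℝ}
    (hf0 : f ⟨0, mem_of_mem_nhds hU⟩ = 0) (hdense : Dense {v | f v ≠ 0})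
    (hpos : ∃ v, 0 < f v) (hneg : ∃ v, f v < 0) :
    ∃ v₁ v₂ : U, 0 < f v₁ ∧ f v₂ < 0 ∧ ¬SameRay ℝ (v₁ : E) v₂ := by
  by_contra! hray
  have hne_zero {v : U} (hv : f v ≠ 0) : (v : E) ≠ 0 := fun h ↦
    hv ((congrArg f (Subtype.ext h)).trans hf0)
  obtain ⟨p, hp⟩ := hpos
  obtain ⟨n, hn⟩ := hneg
  have hp_ray {v : U} (hv : f v ≠ 0) : SameRay ℝ (p : E) v := by
    rcases hv.lt_or_gt with hv_neg | hv_pos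
    · exact hray p v hp hv_neg
    · exact (hray p n hp hn).trans (hray v n hv_pos hn).symm fun h ↦ absurd h (hne_zero hn.ne)
  obtain ⟨y, hyU, hy⟩ := exists_mem_not_sameRay hU (hne_zero hp.ne')
  have hopen : IsOpen {v : U | ¬SameRay ℝ (p : E) v} :=
    (isClosed_setOf_sameRay (p : E)).isOpen_compl.preimage continuous_subtype_val
  obtain ⟨v, hv, hv_ray⟩ := hdense.inter_open_nonempty _ hopen ⟨⟨y, hyU⟩, hy⟩
  exact hv (hp_ray hv_ray)

theorem c0Transverse_sign_change_nonradial_general {A M : Type*} [TopologicalSpace A]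
    [NormedAddCommGroup M] [NormedSpace ℝ M] {U : Set E} (hU : U ∈ 𝓝 0)
    {h₁ : C(A, M)} {h₂ : C(U, M)} {ℓ : M →L[ℝ] ℝ} (hℓ : ℓ ≠ 0) (hh₁ : ∀ a, ℓ (h₁ a) = 0)
    (hh₂ : ∀ b, ℓ (h₂ b) = 0 → h₂ b ∈ Set.range h₁)
    (hz : ℓ (h₂ ⟨0, mem_of_mem_nhds hU⟩) = 0)
    (htrans : ∀ a b, h₁ a = h₂ b → C0TransverseAt h₁ h₂ a b) :
    ∃ v₁ v₂ : U, 0 < ℓ (h₂ v₁) ∧ ℓ (h₂ v₂) < 0 ∧ ¬SameRay ℝ (v₁ : E) v₂ := by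
  have hpos_near {b : U} (hb : ℓ (h₂ b) = 0) : ∃ᶠ v in 𝓝 b, 0 < ℓ (h₂ v) := by
    obtain ⟨a, ha⟩ := hh₂ b hb
    exact (htrans a b ha).frequently_apply_pos hℓ (.of_forall fun x ↦ (hh₁ x).ge)
  have hneg_near {b : U} (hb : ℓ (h₂ b) = 0) : ∃ᶠ v in 𝓝 b, ℓ (h₂ v) < 0 := by
    obtain ⟨a, ha⟩ := hh₂ b hb
    exact (htrans a b ha).frequently_apply_neg hℓ (.of_forall fun x ↦ (hh₁ x).le)
  have hdense : Dense {v | ℓ (h₂ v) ≠ 0} := fun b ↦ by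
    by_cases hb : ℓ (h₂ b) = 0
    · exact mem_closure_iff_frequently.2 ((hpos_near hb).mono fun _ hv ↦ hv.ne')
    · exact subset_closure hb
  exact exists_pos_neg_not_sameRay_of_dense hU hz hdense (hpos_near hz).exists (hneg_near hz).exists

end Rays

section Slice

variable {m : ℕ} (hm : 1 ≤ m) {y : EuclideanSpace ℝ (Fin m)}

theorem apply_lastIndex_eq_zero_of_mem_openSlice (hy : y ∈ openSlice m) :
    y (lastIndex m hm) = 0 :=
  (hy _).2 (Nat.sub_add_cancel hm)

theorem mem_openSlice_of_mem_openCube (hy : y ∈ openCube m) (hy0 : y (lastIndex m hm) = 0) :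
    y ∈ openSlice m := by
  refine fun i ↦ ⟨fun _ ↦ hy i, fun hi ↦ ?_⟩
  have hi_last : i = lastIndex m hm := Fin.ext (Nat.eq_sub_of_add_eq hi)
  rw [hi_last, hy0]

end Slice

theorem euclideanSpace_proj_ne_zero {ι : Type*} (i : ι) :
    (EuclideanSpace.proj i : EuclideanSpace ℝ ι →L[ℝ] ℝ) ≠ 0 := by
  classical
  exact fun h ↦ by simpa using DFunLike.congr_fun h (EuclideanSpace.single i 1)

/-- Let `m, u ≥ 1`, `U ⊆ ℝᵘ` an open neighborhood of `0`,
`h₁ : A → ℝᵐ` continuous with image `(-1,1)^{m-1} × {0}`, and `h₂ : U → ℝᵐ` continuous with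
image in `(-1,1)ᵐ`.  If the `m`-th coordinate of `h₂(0)` is `0` and `h₁`, `h₂` are `C⁰`
transverse at every pair `(a, b)` with `h₁ a = h₂ b`, then there are `v₁, v₂ ∈ U` with
`(h₂ v₁)ₘ > 0`, `(h₂ v₂)ₘ < 0` and `v₁ ∉ {t • v₂ : t ≥ 0}`. -/
theorem c0Transverse_sign_change_nonradial (m u : ℕ) (hm : 1 ≤ m) (hu : 1 ≤ u)
    (A : Type*) [TopologicalSpace A]
    (U : Set (EuclideanSpace ℝ (Fin u))) (hU : IsOpen U) (hU0 : 0 ∈ U)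
    (h₁ : C(A, EuclideanSpace ℝ (Fin m))) (h₂ : C(U, EuclideanSpace ℝ (Fin m)))
    (hh₁ : Set.range h₁ = openSlice m)
    (hh₂ : ∀ v : U, h₂ v ∈ openCube m)
    (hz : h₂ ⟨0, hU0⟩ (lastIndex m hm) = 0)
    (htrans : ∀ (a : A) (b : U), h₁ a = h₂ b → C0TransverseAt h₁ h₂ a b) :
    ∃ v₁ v₂ : U, 0 < h₂ v₁ (lastIndex m hm) ∧ h₂ v₂ (lastIndex m hm) < 0 ∧
      ∀ t : ℝ, 0 ≤ t → (v₁ : EuclideanSpace ℝ (Fin u)) ≠ t • (v₂ : EuclideanSpace ℝ (Fin u)) := by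
  obtain ⟨v₁, v₂, hv₁, hv₂, hray⟩ := c0Transverse_sign_change_nonradial_general
    (hU.mem_nhds hU0) (euclideanSpace_proj_ne_zero (lastIndex m hm))
    (fun a ↦ apply_lastIndex_eq_zero_of_mem_openSlice hm (hh₁ ▸ Set.mem_range_self a))
    (fun b hb ↦ hh₁ ▸ mem_openSlice_of_mem_openCube hm (hh₂ b) hb) hz htrans
  exact ⟨v₁, v₂, hv₁, hv₂, fun t ht h ↦ hray (h ▸ SameRay.sameRay_nonneg_smul_left _ ht)⟩
end
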